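/- Fix an integer j ≥ 0 and for each integer k > j set θ_{j,k} = (2j+1)π/(2(2k+1)) and C_{j,k} = Σ_{i=0}^{k−1} 4(k−i)·cos((2i+1)θ_{j,k}). Then the sequence k ↦ C_{j,k} is strictly increasing on k > j: for all integers j < k < k', C_{j,k} < C_{j,k'}. -/

import Mathlib

theorem aux_S (t : ℝ) (m : ℕ) :
    2 * Real.sin t * ∑ i ∈ Finset.range m, Real.cos ((2 * (i : ℝ) + 1) * t)
      = Real.sin (2 * (m : ℝ) * t) := by
  induction m with
  | zero => simp
  | succ m ih =>
    rw [Finset.sum_range_succ, mul_add, ih]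
    have h1 : 2 * (m : ℝ) * t = (2 * (m : ℝ) + 1) * t - t := by ring
    have h2 : 2 * ((m + 1 : ℕ) : ℝ) * t = (2 * (m : ℝ) + 1) * t + t := by push_cast; ring
    rw [h1, h2, Real.sin_sub, Real.sin_add]
    ring

theorem aux_C (t : ℝ) (k : ℕ) :
    Real.sin t ^ 2 * ∑ i ∈ Finset.range k, 4 * ((k : ℝ) - (i : ℝ)) * Real.cos ((2 * (i : ℝ) + 1) * t)
      = Real.cos t - Real.cos ((2 * (k : ℝ) + 1) * t) := by
  induction k with
  | zero => simp
  | succ k ih =>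
    have h : ∑ i ∈ Finset.range (k + 1), 4 * (((k + 1 : ℕ) : ℝ) - (i : ℝ)) * Real.cos ((2 * (i : ℝ) + 1) * t)
        = ∑ i ∈ Finset.range k, 4 * ((k : ℝ) - (i : ℝ)) * Real.cos ((2 * (i : ℝ) + 1) * t)
          + 4 * ∑ i ∈ Finset.range (k + 1), Real.cos ((2 * (i : ℝ) + 1) * t) := by
      rw [Finset.sum_range_succ, Finset.sum_range_succ _ k, mul_add, Finset.mul_sum, ← add_assoc,
        ← Finset.sum_add_distrib]
      congr 1
      · apply Finset.sum_congr rfl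
        intro i _
        push_cast
        ring
      · push_cast
        ring
    have hS := aux_S t (k + 1)
    have h1 : (2 * (k : ℝ) + 1) * t = 2 * ((k + 1 : ℕ) : ℝ) * t - t := by push_cast; ring
    have h2 : (2 * ((k + 1 : ℕ) : ℝ) + 1) * t = 2 * ((k + 1 : ℕ) : ℝ) * t + t := by ring
    rw [h, mul_add, ih, h1, h2, Real.cos_sub, Real.cos_add, ← hS]
    ring

theorem aux_closed (j k : ℕ) (hjk : j < k) :
    0 < (2 * (j : ℝ) + 1) * Real.pi / (2 * (2 * (k : ℝ) + 1)) ∧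
    (2 * (j : ℝ) + 1) * Real.pi / (2 * (2 * (k : ℝ) + 1)) < Real.pi / 2 ∧
    (∑ i ∈ Finset.range k, 4 * ((k : ℝ) - (i : ℝ)) *
          Real.cos ((2 * (i : ℝ) + 1) * ((2 * (j : ℝ) + 1) * Real.pi / (2 * (2 * (k : ℝ) + 1)))))
      = Real.cos ((2 * (j : ℝ) + 1) * Real.pi / (2 * (2 * (k : ℝ) + 1))) /
        Real.sin ((2 * (j : ℝ) + 1) * Real.pi / (2 * (2 * (k : ℝ) + 1))) ^ 2 := by
  have hp := Real.pi_pos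
  have hjk' : (j : ℝ) < k := by exact_mod_cast hjk
  have h0 : 0 < (2 * (j : ℝ) + 1) * Real.pi / (2 * (2 * (k : ℝ) + 1)) := by positivity
  have h1 : (2 * (j : ℝ) + 1) * Real.pi / (2 * (2 * (k : ℝ) + 1)) < Real.pi / 2 := by
    rw [div_lt_div_iff₀ (by positivity) (by norm_num)]
    nlinarith
  refine ⟨h0, h1, ?_⟩
  have hC := aux_C ((2 * (j : ℝ) + 1) * Real.pi / (2 * (2 * (k : ℝ) + 1))) k
  have hz : Real.cos ((2 * (k : ℝ) + 1) * ((2 * (j : ℝ) + 1) * Real.pi / (2 * (2 * (k : ℝ) + 1)))) = 0 := by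
    rw [Real.cos_eq_zero_iff]
    refine ⟨j, ?_⟩
    push_cast
    field_simp
  rw [hz, sub_zero] at hC
  have hs := Real.sin_pos_of_pos_of_lt_pi h0 (by linarith)
  rw [eq_div_iff (by positivity), ← hC]
  ring

/-- for fixed `j`, the quantity
`C_{j,k} = Σ_{i=0}^{k−1} 4(k−i)cos((2i+1)θ_{j,k})`, with
`θ_{j,k} = (2j+1)π/(2(2k+1))`, is strictly increasing in `k` on `k > j`. -/
theorem C_strict_increasing (j : ℕ) :
    ∀ k k' : ℕ, j < k → k < k' →
      (∑ i ∈ Finset.range k, 4 * ((k : ℝ) - (i : ℝ)) *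
          Real.cos ((2 * (i : ℝ) + 1) * ((2 * (j : ℝ) + 1) * Real.pi / (2 * (2 * (k : ℝ) + 1))))) <
      (∑ i ∈ Finset.range k', 4 * ((k' : ℝ) - (i : ℝ)) *
          Real.cos ((2 * (i : ℝ) + 1) * ((2 * (j : ℝ) + 1) * Real.pi / (2 * (2 * (k' : ℝ) + 1))))) := by
  intro k k' hjk hkk
  obtain ⟨a0, a1, a2⟩ := aux_closed j k hjk
  obtain ⟨b0, b1, b2⟩ := aux_closed j k' (hjk.trans hkk)
  rw [a2, b2]
  have hp := Real.pi_pos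
  have hlt : (2 * (j : ℝ) + 1) * Real.pi / (2 * (2 * (k' : ℝ) + 1))
      < (2 * (j : ℝ) + 1) * Real.pi / (2 * (2 * (k : ℝ) + 1)) := by
    have : (k : ℝ) < k' := by exact_mod_cast hkk
    apply div_lt_div_of_pos_left (by positivity) (by positivity)
    linarith
  have hc := Real.cos_lt_cos_of_nonneg_of_le_pi_div_two b0.le a1.le hlt
  have hs := Real.sin_lt_sin_of_lt_of_le_pi_div_two (by linarith) a1.le hlt
  have hs0 := Real.sin_pos_of_pos_of_lt_pi b0 (by linarith)
  have hc0 := Real.cos_pos_of_mem_Ioo ⟨by linarith, a1⟩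
  apply div_lt_div₀ hc _ (hc0.trans hc).le (by positivity)
  exact pow_le_pow_left₀ hs0.le hs.le 2
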